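/- Let (X, A, d) be a C*-algebra-valued metric space and let F : X × X → X satisfy d(F(x,y), F(u,v)) ⪯ a* · d(x,u) · a + a* · d(y,v) · a for all x, y, u, v ∈ X, where a ∈ A with ‖a‖ < 1/√2. If (x, y) and (x', y') are both coupled fixed points of F, then x = x' and y = y'. -/

import Mathlib

/-!
A coupled fixed point of `F` is a fixed point of `(x, y) ↦ (F x y, F y x)` on `X × X`. For the
distance `d x u + d y v` on the product, this map is a contraction with coefficient `b = √2 a`,
and `‖b‖ < 1`. The distance `s` between two of its fixed points thus satisfies `0 ≤ s ≤ b* s b`,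
which forces `‖s‖ ≤ ‖b‖² ‖s‖`, so `s = 0`.
-/

open Function

theorem norm_star_mul_mul_le {A : Type*} [NonUnitalSeminormedRing A] [StarRing A]
    [NormedStarGroup A] (b s : A) : ‖star b * s * b‖ ≤ ‖b‖ ^ 2 * ‖s‖ :=
  calc ‖star b * s * b‖ ≤ ‖star b‖ * ‖s‖ * ‖b‖ := norm_mul₃_le
    _ = ‖b‖ ^ 2 * ‖s‖ := by rw [norm_star]; ring

theorem star_sqrt_two_smul_mul_mul {A : Type*} [NonUnitalNonAssocSemiring A] [StarRing A]
    [Module ℝ A] [StarModule ℝ A] [IsScalarTower ℝ A A] [SMulCommClass ℝ A A] (a s : A) :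
    star (√2 • a) * s * (√2 • a) = star a * s * a + star a * s * a := by
  rw [star_smul, star_trivial, smul_mul_assoc, smul_mul_assoc, mul_smul_comm, smul_smul,
    Real.mul_self_sqrt zero_le_two, two_smul]

theorem norm_sqrt_two_smul_lt_one {E : Type*} [SeminormedAddCommGroup E] [NormedSpace ℝ E]
    {a : E} (ha : ‖a‖ < 1 / √2) : ‖√2 • a‖ < 1 := by
  rwa [norm_smul, Real.norm_of_nonneg (Real.sqrt_nonneg 2), ← lt_div_iff₀' (by positivity)]

section Contraction

variable {A : Type*} [NonUnitalCStarAlgebra A] [PartialOrder A] [StarOrderedRing A]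

theorem eq_zero_of_le_star_mul_mul {b s : A} (hb : ‖b‖ < 1) (hs : 0 ≤ s)
    (h : s ≤ star b * s * b) : s = 0 := by
  have h_norm : ‖s‖ ≤ ‖b‖ ^ 2 * ‖s‖ :=
    (CStarAlgebra.norm_le_norm_of_nonneg_of_le hs h).trans (norm_star_mul_mul_le b s)
  have hb_sq : ‖b‖ ^ 2 < 1 := pow_lt_one₀ (norm_nonneg b) hb two_ne_zero
  by_contra hs_ne
  exact (mul_lt_of_lt_one_left (norm_pos_iff.mpr hs_ne) hb_sq).not_ge h_norm

theorem eq_of_isFixedPt_of_le_star_mul_mul {X : Type*} {d : X → X → A}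
    (d_nonneg : ∀ x y, 0 ≤ d x y) (eq_of_d_eq_zero : ∀ x y, d x y = 0 → x = y)
    {T : X → X} {b : A} (hb : ‖b‖ < 1) (hT : ∀ x y, d (T x) (T y) ≤ star b * d x y * b)
    {x y : X} (hx : IsFixedPt T x) (hy : IsFixedPt T y) : x = y := by
  refine eq_of_d_eq_zero x y (eq_zero_of_le_star_mul_mul hb (d_nonneg x y) ?_)
  simpa only [hx.eq, hy.eq] using hT x y

end Contraction

/-- The self-map `(x, y) ↦ (F x y, F y x)` of `X × X`, introduced because its fixed points are the
coupled fixed points of `F`. -/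
def coupledMap {X : Type*} (F : X → X → X) (p : X × X) : X × X :=
  (F p.1 p.2, F p.2 p.1)

theorem isFixedPt_coupledMap_iff {X : Type*} {F : X → X → X} {x y : X} :
    IsFixedPt (coupledMap F) (x, y) ↔ F x y = x ∧ F y x = y :=
  Prod.mk_inj

/-- The sum distance `d x u + d y v` between `(x, y)` and `(u, v)`, with values in `A`. It is the
distance on `X × X` for which `coupledMap F` is a contraction. -/
def sumDist {X A : Type*} [Add A] (d : X → X → A) (p q : X × X) : A :=
  d p.1 q.1 + d p.2 q.2

section Coupled

variable {X A : Type*} {d : X → X → A}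

theorem sumDist_nonneg [AddZeroClass A] [Preorder A] [AddLeftMono A]
    (d_nonneg : ∀ x y, 0 ≤ d x y) (p q : X × X) : 0 ≤ sumDist d p q :=
  add_nonneg (d_nonneg _ _) (d_nonneg _ _)

theorem eq_of_sumDist_eq_zero [AddZeroClass A] [PartialOrder A] [AddLeftMono A] [AddRightMono A]
    (d_nonneg : ∀ x y, 0 ≤ d x y) (eq_of_d_eq_zero : ∀ x y, d x y = 0 → x = y)
    (p q : X × X) (h : sumDist d p q = 0) : p = q := by
  obtain ⟨h_fst, h_snd⟩ := (add_eq_zero_iff_of_nonneg (d_nonneg _ _) (d_nonneg _ _)).mp h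
  exact Prod.ext (eq_of_d_eq_zero _ _ h_fst) (eq_of_d_eq_zero _ _ h_snd)

variable [NonUnitalCStarAlgebra A] [PartialOrder A] [StarOrderedRing A]

theorem sumDist_coupledMap_le {F : X → X → X} {a : A}
    (hF : ∀ x y u v, d (F x y) (F u v) ≤ star a * d x u * a + star a * d y v * a)
    (p q : X × X) :
    sumDist d (coupledMap F p) (coupledMap F q) ≤
      star (√2 • a) * sumDist d p q * (√2 • a) := by
  obtain ⟨x, y⟩ := p
  obtain ⟨u, v⟩ := q
  calc d (F x y) (F u v) + d (F y x) (F v u)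
      ≤ (star a * d x u * a + star a * d y v * a) +
          (star a * d y v * a + star a * d x u * a) := add_le_add (hF x y u v) (hF y x v u)
    _ = star a * (d x u + d y v) * a + star a * (d x u + d y v) * a := by
      rw [mul_add, add_mul, add_comm (star a * d y v * a)]
    _ = star (√2 • a) * (d x u + d y v) * (√2 • a) := (star_sqrt_two_smul_mul_mul a _).symm

theorem coupled_fixed_point_unique_general
    (d_nonneg : ∀ x y, 0 ≤ d x y) (eq_of_d_eq_zero : ∀ x y, d x y = 0 → x = y)
    {F : X → X → X} {a : A} (ha : ‖a‖ < 1 / √2)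
    (hF : ∀ x y u v, d (F x y) (F u v) ≤ star a * d x u * a + star a * d y v * a)
    {x y x' y' : X} (hxy : F x y = x ∧ F y x = y) (hxy' : F x' y' = x' ∧ F y' x' = y') :
    x = x' ∧ y = y' :=
  Prod.mk_inj.mp <| eq_of_isFixedPt_of_le_star_mul_mul (sumDist_nonneg d_nonneg)
    (eq_of_sumDist_eq_zero d_nonneg eq_of_d_eq_zero) (norm_sqrt_two_smul_lt_one ha)
    (sumDist_coupledMap_le hF) (isFixedPt_coupledMap_iff.mpr hxy)
    (isFixedPt_coupledMap_iff.mpr hxy')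

end Coupled

/-- In a C*-algebra-valued metric space, if
`d (F x y) (F u v) ⪯ a* ⬝ d x u ⬝ a + a* ⬝ d y v ⬝ a` with `‖a‖ < 1/√2`, then coupled fixed
points of `F` are unique. -/
theorem coupled_fixed_point_unique
    {X : Type*} {A : Type*} [CStarAlgebra A]
    [PartialOrder A] [StarOrderedRing A]
    (d : X → X → A)
    (d_nonneg : ∀ x y, 0 ≤ d x y)
    (d_eq_zero : ∀ x y, d x y = 0 ↔ x = y)
    (d_symm : ∀ x y, d x y = d y x)
    (d_triangle : ∀ x y z, d x y ≤ d x z + d z y)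
    (F : X → X → X) (a : A)
    (ha : ‖a‖ < 1 / Real.sqrt 2)
    (hF : ∀ x y u v : X, d (F x y) (F u v) ≤ star a * d x u * a + star a * d y v * a)
    (x y x' y' : X)
    (hxy : F x y = x ∧ F y x = y)
    (hxy' : F x' y' = x' ∧ F y' x' = y') :
    x = x' ∧ y = y' :=
  coupled_fixed_point_unique_general d_nonneg (fun x y => (d_eq_zero x y).mp) ha hF hxy hxy'
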